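/- Define vertex weights w_i = c_i + ∑_{j:(i,j)∈E}(q²_{ij} − q¹_{ij}) for each i∈V. Then for every vertex cover P of G, f(P) = ∑_{i∈P} w_i + ∑_{(i,j)∈E}(2q¹_{ij} − q²_{ij}); consequently a vertex cover P minimizes the VCPNEW objective f over all vertex covers if and only if P is a minimum weight vertex cover for the weights w. -/

import Mathlib

open Finset

variable {V : Type*} [Fintype V] [DecidableEq V]

/-- Edges of `E` with no endpoint in `U`. -/
def E0 (E : Finset (V × V)) (U : Finset V) : Finset (V × V) :=
  E.filter fun e => e.1 ∉ U ∧ e.2 ∉ U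

/-- Edges of `E` with exactly one endpoint in `U`. -/
def E1 (E : Finset (V × V)) (U : Finset V) : Finset (V × V) :=
  E.filter fun e => (e.1 ∈ U ∧ e.2 ∉ U) ∨ (e.1 ∉ U ∧ e.2 ∈ U)

/-- Edges of `E` with both endpoints in `U`. -/
def E2 (E : Finset (V × V)) (U : Finset V) : Finset (V × V) :=
  E.filter fun e => e.1 ∈ U ∧ e.2 ∈ U

/-- Edges of `E` incident to vertex `i`. -/
def incident (E : Finset (V × V)) (i : V) : Finset (V × V) :=
  E.filter fun e => e.1 = i ∨ e.2 = i

/-- The GVC objective `f`. -/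
def gvcObj (E : Finset (V × V)) (c : V → ℝ) (q0 q1 q2 : V × V → ℝ) (U : Finset V) : ℝ :=
  ∑ i ∈ U, c i + ∑ e ∈ E0 E U, q0 e + ∑ e ∈ E1 E U, q1 e + ∑ e ∈ E2 E U, q2 e
/-- `P` is a vertex cover of the graph with edge set `E`. -/
def IsVC (E : Finset (V × V)) (P : Finset V) : Prop :=
  ∀ e ∈ E, e.1 ∈ P ∨ e.2 ∈ P

/-- The VCPNEW objective. -/
def vcObj (E : Finset (V × V)) (c : V → ℝ) (q1 q2 : V × V → ℝ) (P : Finset V) : ℝ :=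
  ∑ i ∈ P, c i + ∑ e ∈ E1 E P, q1 e + ∑ e ∈ E2 E P, q2 e

/-! Every edge of a vertex cover `P` has one or two endpoints in `P`, so `f` charges `q¹` to all of
`E` and corrects this by `q² - q¹` on `E₂`. Collecting the edge weights `q² - q¹` at the vertices of
`P` counts an edge once for each of its endpoints in `P`, that is, once on `E` and once more on
`E₂`. The two expressions therefore differ by a quantity that does not depend on `P`. -/

section

variable {α M : Type*} [DecidableEq α] {E : Finset (α × α)} {P : Finset α}

theorem sum_incident [AddCommMonoid M] (hE : ∀ e ∈ E, e.1 ≠ e.2) (i : α) (g : α × α → M) :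
    ∑ e ∈ incident E i, g e = ∑ e ∈ E with e.1 = i, g e + ∑ e ∈ E with e.2 = i, g e := by
  have hdisj : Disjoint {e ∈ E | e.1 = i} {e ∈ E | e.2 = i} :=
    disjoint_filter.2 fun e he h₁ h₂ => hE e he (h₁.trans h₂.symm)
  rw [incident, filter_or, sum_union hdisj]

theorem sum_sum_incident [AddCommMonoid M] (hE : ∀ e ∈ E, e.1 ≠ e.2) (P : Finset α)
    (g : α × α → M) :
    ∑ i ∈ P, ∑ e ∈ incident E i, g e =
      ∑ e ∈ E with e.1 ∈ P ∨ e.2 ∈ P, g e + ∑ e ∈ E2 E P, g e :=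
  calc
    ∑ i ∈ P, ∑ e ∈ incident E i, g e
    _ = ∑ e ∈ E with e.1 ∈ P, g e + ∑ e ∈ E with e.2 ∈ P, g e := by
      simp only [sum_incident hE, sum_add_distrib, sum_fiberwise_eq_sum_filter]
    _ = ∑ e ∈ E with e.1 ∈ P ∨ e.2 ∈ P, g e + ∑ e ∈ E2 E P, g e := by
      rw [E2, filter_or, filter_and, sum_union_inter]

theorem disjoint_E1_E2 (E : Finset (α × α)) (P : Finset α) : Disjoint (E1 E P) (E2 E P) :=
  disjoint_filter.2 fun _ _ _ _ => by tauto

namespace IsVC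

theorem E1_union_E2 (hP : IsVC E P) : E1 E P ∪ E2 E P = E := by
  rw [E1, E2, ← filter_or]
  refine filter_true_of_mem fun e he => ?_
  have := hP e he
  tauto

theorem sum_E1_add_sum_E2 [AddCommMonoid M] (hP : IsVC E P) (g : α × α → M) :
    ∑ e ∈ E1 E P, g e + ∑ e ∈ E2 E P, g e = ∑ e ∈ E, g e := by
  rw [← sum_union (disjoint_E1_E2 E P), hP.E1_union_E2]

theorem sum_sum_incident [AddCommMonoid M] (hP : IsVC E P) (hE : ∀ e ∈ E, e.1 ≠ e.2)
    (g : α × α → M) :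
    ∑ i ∈ P, ∑ e ∈ incident E i, g e = ∑ e ∈ E, g e + ∑ e ∈ E2 E P, g e := by
  rw [_root_.sum_sum_incident hE, filter_true_of_mem hP]

theorem vcObj_eq (hP : IsVC E P) (c : α → ℝ) (q1 q2 : α × α → ℝ) :
    vcObj E c q1 q2 P = ∑ i ∈ P, c i + ∑ e ∈ E, q1 e + ∑ e ∈ E2 E P, (q2 e - q1 e) := by
  rw [vcObj, ← hP.sum_E1_add_sum_E2 q1, sum_sub_distrib]
  ring

theorem vcObj_eq_sum_weight_add (hP : IsVC E P) (hE : ∀ e ∈ E, e.1 ≠ e.2) {c : α → ℝ}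
    {q1 q2 : α × α → ℝ} {w : α → ℝ}
    (hw : ∀ i, w i = c i + ∑ e ∈ incident E i, (q2 e - q1 e)) :
    vcObj E c q1 q2 P = ∑ i ∈ P, w i + ∑ e ∈ E, (2 * q1 e - q2 e) := by
  have hq : ∑ e ∈ E, q1 e = ∑ e ∈ E, (q2 e - q1 e) + ∑ e ∈ E, (2 * q1 e - q2 e) := by
    rw [← sum_add_distrib]
    exact sum_congr rfl fun e _ => by ring
  have hweight : ∑ i ∈ P, w i =
      ∑ i ∈ P, c i + (∑ e ∈ E, (q2 e - q1 e) + ∑ e ∈ E2 E P, (q2 e - q1 e)) := by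
    simp only [hw, sum_add_distrib, hP.sum_sum_incident hE]
  rw [hP.vcObj_eq, hq, hweight]
  ring

end IsVC

theorem vcpnew_eq_mwvcp_general (E : Finset (α × α)) (hsimple : ∀ e ∈ E, e.1 ≠ e.2)
    (c : α → ℝ) (q1 q2 : α × α → ℝ) (w : α → ℝ)
    (hw : ∀ i, w i = c i + ∑ e ∈ incident E i, (q2 e - q1 e)) :
    (∀ P : Finset α, IsVC E P →
        vcObj E c q1 q2 P = ∑ i ∈ P, w i + ∑ e ∈ E, (2 * q1 e - q2 e)) ∧
    (∀ P : Finset α, IsVC E P →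
        ((∀ P' : Finset α, IsVC E P' → vcObj E c q1 q2 P ≤ vcObj E c q1 q2 P') ↔
          (∀ P' : Finset α, IsVC E P' → ∑ i ∈ P, w i ≤ ∑ i ∈ P', w i))) := by
  refine ⟨fun P hP => hP.vcObj_eq_sum_weight_add hsimple hw,
    fun P hP => forall₂_congr fun P' hP' => ?_⟩
  rw [hP.vcObj_eq_sum_weight_add hsimple hw, hP'.vcObj_eq_sum_weight_add hsimple hw,
    add_le_add_iff_right]

end

/-- VCPNEW is equivalent to the minimum weight vertex cover problem. -/
theorem vcpnew_eq_mwvcp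
    (E : Finset (V × V))
    (hsimple : ∀ e ∈ E, e.1 ≠ e.2)
    (honce : ∀ e ∈ E, (e.2, e.1) ∉ E)
    (c : V → ℝ) (q1 q2 : V × V → ℝ)
    (w : V → ℝ) (hw : ∀ i, w i = c i + ∑ e ∈ incident E i, (q2 e - q1 e)) :
    (∀ P : Finset V, IsVC E P →
        vcObj E c q1 q2 P = ∑ i ∈ P, w i + ∑ e ∈ E, (2 * q1 e - q2 e)) ∧
    (∀ P : Finset V, IsVC E P →
        ((∀ P' : Finset V, IsVC E P' → vcObj E c q1 q2 P ≤ vcObj E c q1 q2 P') ↔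
          (∀ P' : Finset V, IsVC E P' → ∑ i ∈ P, w i ≤ ∑ i ∈ P', w i))) :=
  vcpnew_eq_mwvcp_general E hsimple c q1 q2 w hw
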